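/- Let A be a commutative ring, let f ∈ A be a nonzerodivisor, and let M be an A-module. Then M is faithfully flat over A if and only if the following three conditions hold: (i) multiplication by f is injective on M; (ii) the quotient M/fM is a faithfully flat module over the quotient ring A/(f); and (iii) the localization M_f is a faithfully flat module over the localization A_f. -/

import Mathlib

/-!
Flatness: if `f` is regular on both `M` and `N`, then `M ⊗ N` has no `f`-torsion as soon as `M/fM`
is flat over `A/(f)`. Indeed, present `N` as `0 → K → F → N → 0` with `F` free. Since `f` is regular
on `N`, the map `K/fK → F/fF` is injective, and it remains so after tensoring with `M`; by the snake
lemma for multiplication by `f` on `M ⊗ K → M ⊗ F → M ⊗ N → 0`, the `f`-torsion of `M ⊗ N` is the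
kernel of `(M ⊗ K)/f → (M ⊗ F)/f`, hence zero. For an ideal `I`, the kernel of `M ⊗ I → M` dies in
`M_f ⊗ I`, hence consists of `f`-power torsion of `M ⊗ I`, hence is zero.

Faithfulness: a maximal ideal `m` with `mM = M` extends to the unit ideal of both `A/(f)` and `A_f`,
whereas it stays proper in the former if `f ∈ m` and in the latter otherwise.
-/

open Function TensorProduct
open scoped Pointwise

section BaseChange

variable {A S M N : Type*} [CommRing A] [CommRing S] [Algebra A S] [AddCommGroup M] [Module A M]
  [AddCommGroup N] [Module A N] [Module S N] [IsScalarTower A S N] {l : M →ₗ[A] N}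

variable (M) in
theorem isBaseChange_mkQ_smul_top (I : Ideal A) :
    IsBaseChange (A ⧸ I) (I • ⊤ : Submodule A M).mkQ :=
  IsBaseChange.of_equiv
    ((quotTensorEquivQuotSMul M I).extendScalarsOfSurjective Ideal.Quotient.mk_surjective)
    fun m ↦ quotTensorEquivQuotSMul_mk_one_tmul I m

theorem faithfullyFlat_of_isBaseChange [Module.FaithfullyFlat A M] (hl : IsBaseChange S l) :
    Module.FaithfullyFlat S N :=
  .of_linearEquiv _ _ hl.equiv.symm

theorem map_algebraMap_eq_top_of_smul_top_eq_top [Module.FaithfullyFlat S N]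
    (hl : IsBaseChange S l) {I : Ideal A} (hI : I • (⊤ : Submodule A M) = ⊤) :
    I.map (algebraMap A S) = ⊤ := by
  refine ((Module.FaithfullyFlat.iff_flat_and_ideal_smul_eq_top S N).1 inferInstance).2 _
    (eq_top_iff.2 fun n _ ↦ ?_)
  induction n using hl.inductionOn with
  | zero => exact zero_mem _
  | tmul m =>
    have hm : l m ∈ I • (⊤ : Submodule A N) :=
      Submodule.smul_top_le_comap_smul_top I l (hI.ge trivial)
    rwa [← Submodule.restrictScalars_top A S N, ← Ideal.smul_restrictScalars] at hm
  | smul s n hn => exact Submodule.smul_mem _ s (hn trivial)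
  | add n₁ n₂ hn₁ hn₂ => exact add_mem (hn₁ trivial) (hn₂ trivial)

end BaseChange

section Flat

variable {A K F : Type*} [CommRing A] [AddCommGroup K] [Module A K] [AddCommGroup F] [Module A F]

theorem lTensor_injective_of_flat_of_lTensor_injective {S P : Type*} [CommRing S] [Algebra A S]
    [AddCommGroup P] [Module A P] [Module S P] [IsScalarTower A S P] [Module.Flat S P]
    {i : K →ₗ[A] F} (hi : Injective (i.lTensor S)) : Injective (i.lTensor P) := by
  have hPi : Injective ((AlgebraTensorModule.lTensor S S i).lTensor P) :=
    Module.Flat.lTensor_preserves_injective_linearMap _ hi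
  have hcomm : i.lTensor P ∘ AlgebraTensorModule.cancelBaseChange A S S P K =
      AlgebraTensorModule.cancelBaseChange A S S P F ∘
        (AlgebraTensorModule.lTensor S S i).lTensor P :=
    congrArg DFunLike.coe (AlgebraTensorModule.lTensor_comp_cancelBaseChange A S S i)
  rw [← EquivLike.injective_comp (AlgebraTensorModule.cancelBaseChange A S S P K), hcomm,
    EquivLike.comp_injective]
  exact hPi

theorem lTensor_injective_of_flat_of_isLocalizedModule {T : Submonoid A} {M M' : Type*}
    [AddCommGroup M] [Module A M] [AddCommGroup M'] [Module A M'] [Module.Flat A M']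
    (l : M →ₗ[A] M') [IsLocalizedModule T l] {i : K →ₗ[A] F} (hi : Injective i)
    (hT : ∀ t ∈ T, IsSMulRegular (M ⊗[A] K) t) : Injective (i.lTensor M) := by
  have : IsLocalizedModule T (l.rTensor K) :=
    inferInstanceAs (IsLocalizedModule T (AlgebraTensorModule.rTensor A K l))
  have hl : Injective (l.rTensor K) :=
    (IsLocalizedModule.injective_iff_isRegular T _).2 fun t ↦ hT t t.2
  have hcomm : l.rTensor F ∘ₗ i.lTensor M = i.lTensor M' ∘ₗ l.rTensor K := by
    rw [LinearMap.lTensor_comp_rTensor, LinearMap.rTensor_comp_lTensor]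
  refine .of_comp (f := l.rTensor F) ?_
  rw [← LinearMap.coe_comp, hcomm, LinearMap.coe_comp]
  exact (Module.Flat.lTensor_preserves_injective_linearMap i hi).comp hl

end Flat

section Regular

variable {A : Type*} [CommRing A] {f : A} {K F N : Type*} [AddCommGroup K] [Module A K]
  [AddCommGroup F] [Module A F] [AddCommGroup N] [Module A N] {i : K →ₗ[A] F} {g : F →ₗ[A] N}

theorem quotSMulTop_map_injective_iff_lTensor_injective :
    Injective (QuotSMulTop.map f i) ↔ Injective (i.lTensor (A ⧸ Ideal.span {f})) := by
  have hcomm : QuotSMulTop.equivQuotTensor f F ∘ QuotSMulTop.map f i =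
      i.lTensor (A ⧸ Ideal.span {f}) ∘ QuotSMulTop.equivQuotTensor f K :=
    congrArg DFunLike.coe (QuotSMulTop.equivQuotTensor_naturality f i)
  rw [← EquivLike.comp_injective _ (QuotSMulTop.equivQuotTensor f F), hcomm,
    EquivLike.injective_comp]

theorem quotSMulTop_map_injective_of_exact (hi : Injective i) (hig : Exact i g)
    (hN : IsSMulRegular N f) : Injective (QuotSMulTop.map f i) := by
  have := QuotSMulTop.map_first_exact_on_four_term_exact_of_isSMulRegular_last
    ((LinearMap.exact_zero_iff_injective PUnit i).2 hi) hig hN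
  rw [map_zero] at this
  exact (LinearMap.exact_zero_iff_injective _ _).1 this

theorem isSMulRegular_of_exact_of_quotSMulTop_map_injective (hig : Exact i g) (hg : Surjective g)
    (hF : IsSMulRegular F f) (hi : Injective (QuotSMulTop.map f i)) : IsSMulRegular N f := by
  refine .of_right_eq_zero_of_smul fun n hn ↦ ?_
  obtain ⟨y, rfl⟩ := hg n
  obtain ⟨k, hk⟩ := (hig (f • y)).1 (by rw [map_smul, hn])
  have hk_mem : k ∈ f • (⊤ : Submodule A K) := by
    rw [← Submodule.Quotient.mk_eq_zero]
    refine hi ?_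
    rw [QuotSMulTop.map_apply_mk, map_zero, hk, Submodule.Quotient.mk_eq_zero]
    exact Submodule.smul_mem_pointwise_smul y f ⊤ trivial
  obtain ⟨k', -, rfl⟩ := (Submodule.mem_smul_pointwise_iff_exists _ _ _).1 hk_mem
  have hy : i k' = y := hF (by rwa [map_smul] at hk)
  exact (hig y).2 ⟨k', hy⟩

variable {M : Type*} [AddCommGroup M] [Module A M]
  [Module.Flat (A ⧸ Ideal.span {f}) ((A ⧸ Ideal.span {f}) ⊗[A] M)]

theorem isSMulRegular_tensorProduct_of_exact (hi : Injective i) (hig : Exact i g)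
    (hg : Surjective g) (hMF : IsSMulRegular (M ⊗[A] F) f) (hN : IsSMulRegular N f) :
    IsSMulRegular (M ⊗[A] N) f := by
  have hif : Injective (QuotSMulTop.map f i) := quotSMulTop_map_injective_of_exact hi hig hN
  have hMif : Injective (QuotSMulTop.map f (i.lTensor M)) := by
    rw [quotSMulTop_map_injective_iff_lTensor_injective] at hif ⊢
    simpa [LinearMap.lTensor_tensor] using
      lTensor_injective_of_flat_of_lTensor_injective (P := (A ⧸ Ideal.span {f}) ⊗[A] M) hif
  exact isSMulRegular_of_exact_of_quotSMulTop_map_injective (lTensor_exact M hig hg)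
    (LinearMap.lTensor_surjective M hg) hMF hMif

theorem isSMulRegular_tensorProduct_of_flat_quotient (hM : IsSMulRegular M f)
    (hN : IsSMulRegular N f) : IsSMulRegular (M ⊗[A] N) f :=
  let g : (N →₀ A) →ₗ[A] N := Finsupp.linearCombination A id
  isSMulRegular_tensorProduct_of_exact (K := g.ker) g.ker.injective_subtype
    g.exact_subtype_ker_map (Finsupp.linearCombination_id_surjective A N) (hM.rTensor _) hN

end Regular

section Stratification

variable {A : Type*} [CommRing A] {f : A} {M : Type*} [AddCommGroup M] [Module A M]

theorem flat_of_flat_quotient_of_flat_away (hf : IsSMulRegular A f) (hM : IsSMulRegular M f)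
    [Module.Flat (A ⧸ Ideal.span {f}) ((A ⧸ Ideal.span {f}) ⊗[A] M)]
    {L : Type*} [AddCommGroup L] [Module A L] [Module.Flat A L] (l : M →ₗ[A] L)
    [IsLocalizedModule.Away f l] : Module.Flat A M := by
  refine Module.Flat.iff_lTensor_injective'.2 fun I ↦ ?_
  refine lTensor_injective_of_flat_of_isLocalizedModule (T := .powers f) l I.injective_subtype ?_
  rintro _ ⟨n, rfl⟩
  exact (isSMulRegular_tensorProduct_of_flat_quotient hM (hf.submodule I f)).pow n

theorem faithfullyFlat_of_flat_of_quotient_of_away [Module.Flat A M]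
    {Q S L : Type*} [AddCommGroup Q] [Module A Q] [Module (A ⧸ Ideal.span {f}) Q]
    [IsScalarTower A (A ⧸ Ideal.span {f}) Q] [Module.FaithfullyFlat (A ⧸ Ideal.span {f}) Q]
    {q : M →ₗ[A] Q} (hq : IsBaseChange (A ⧸ Ideal.span {f}) q)
    [CommRing S] [Algebra A S] [IsLocalization.Away f S] [AddCommGroup L] [Module A L] [Module S L]
    [IsScalarTower A S L] [Module.FaithfullyFlat S L] {l : M →ₗ[A] L} (hl : IsBaseChange S l) :
    Module.FaithfullyFlat A M where
  submodule_ne_top m hm htop := by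
    by_cases hfm : f ∈ m
    · have hker : RingHom.ker (algebraMap A (A ⧸ Ideal.span {f})) ≤ m := by
        simpa using hfm
      have hint : (algebraMap A (A ⧸ Ideal.span {f})).IsIntegral :=
        RingHom.isIntegral_of_surjective _ Ideal.Quotient.mk_surjective
      exact hm.ne_top <| (Ideal.map_eq_top_iff_of_ker_le _ hker hint).1 <|
        map_algebraMap_eq_top_of_smul_top_eq_top hq htop
    · have hdisj : Disjoint (Submonoid.powers f : Set A) m :=
        (Ideal.disjoint_powers_iff_notMem f hm.isPrime.isRadical).2 hfm
      exact (IsLocalization.map_algebraMap_ne_top_iff_disjoint (.powers f) S m).2 hdisj <|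
        map_algebraMap_eq_top_of_smul_top_eq_top hl htop

end Stratification

/-- Faithful flatness over a commutative ring `A` can be tested on the constructible
stratification given by a nonzerodivisor `f`: `M` is faithfully flat over `A` iff
multiplication by `f` is injective on `M`, `M/fM` is faithfully flat over `A/(f)`,
and `M_f` is faithfully flat over `A_f`. -/
theorem faithfullyFlat_iff_of_nonZeroDivisor {A : Type*} [CommRing A] (f : A)
    (hf : f ∈ nonZeroDivisors A) (M : Type*) [AddCommGroup M] [Module A M] :
    Module.FaithfullyFlat A M ↔
      (Function.Injective (fun m : M => f • m) ∧
        Module.FaithfullyFlat (A ⧸ Ideal.span {f})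
          (M ⧸ (Ideal.span {f} • ⊤ : Submodule A M)) ∧
        Module.FaithfullyFlat (Localization (Submonoid.powers f))
          (LocalizedModule (Submonoid.powers f) M)) := by
  have hquot := isBaseChange_mkQ_smul_top M (Ideal.span {f})
  have hloc := LocalizedModule.isBaseChange (Submonoid.powers f) M
  constructor
  · intro _
    exact ⟨Module.Flat.isSMulRegular_of_nonZeroDivisors hf,
      faithfullyFlat_of_isBaseChange hquot, faithfullyFlat_of_isBaseChange hloc⟩
  · rintro ⟨hM, _, _⟩
    have : Module.Flat (A ⧸ Ideal.span {f}) ((A ⧸ Ideal.span {f}) ⊗[A] M) :=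
      .of_linearEquiv hquot.equiv
    have : Module.Flat A (LocalizedModule (Submonoid.powers f) M) :=
      .trans A (Localization (Submonoid.powers f)) _
    have : Module.Flat A M :=
      flat_of_flat_quotient_of_flat_away (Module.Flat.isSMulRegular_of_nonZeroDivisors hf) hM
        (LocalizedModule.mkLinearMap (Submonoid.powers f) M)
    exact faithfullyFlat_of_flat_of_quotient_of_away hquot hloc
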